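/- Let A ∈ M_d(ℂ) and suppose α is an extreme point of W(A) whose preimage under f_A contains two linearly independent unit vectors. Then there exists a sequence of matrices A_n → A and segments s_n, each s_n being a one-dimensional face (flat boundary portion) of W(A_n), such that s_n → {α} in the Hausdorff distance. -/

import Mathlib

open Matrix Complex

/-- Numerical range map `f_A(x) = x* A x`. -/
noncomputable def nrMap {d : ℕ} (A : Matrix (Fin d) (Fin d) ℂ) (x : Fin d → ℂ) : ℂ :=
  star x ⬝ᵥ A *ᵥ x

/-- Real part `Re(A) = (A + A*)/2`. -/
noncomputable def reP {d : ℕ} (A : Matrix (Fin d) (Fin d) ℂ) : Matrix (Fin d) (Fin d) ℂ :=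
  ((2:ℂ)⁻¹) • (A + Aᴴ)

/-- Imaginary part `Im(A) = (A - A*)/(2i)`. -/
noncomputable def imP {d : ℕ} (A : Matrix (Fin d) (Fin d) ℂ) : Matrix (Fin d) (Fin d) ℂ :=
  (((2:ℂ) * Complex.I)⁻¹) • (A - Aᴴ)

/-- `A(θ) = cos θ · Re(A) + sin θ · Im(A)`. -/
noncomputable def Ath {d : ℕ} (A : Matrix (Fin d) (Fin d) ℂ) (θ : ℝ) :
    Matrix (Fin d) (Fin d) ℂ :=
  Real.cos θ • reP A + Real.sin θ • imP A

/-- Numerical range `W(A)`. -/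
noncomputable def numRange {d : ℕ} (A : Matrix (Fin d) (Fin d) ℂ) : Set ℂ :=
  {z : ℂ | ∃ x : Fin d → ℂ, star x ⬝ᵥ x = 1 ∧ z = nrMap A x}

lemma nr_expand {d : ℕ} (A : Matrix (Fin d) (Fin d) ℂ) (x y : Fin d → ℂ) (a b : ℂ) :
    nrMap A (a • x + b • y) = star a * a * nrMap A x + star b * b * nrMap A y
      + star a * b * (star x ⬝ᵥ A *ᵥ y) + star b * a * (star y ⬝ᵥ A *ᵥ x) := by
  simp only [nrMap, star_add, star_smul, mulVec_add, mulVec_smul, dotProduct_add,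
    add_dotProduct, smul_dotProduct, dotProduct_smul, smul_eq_mul]
  ring

lemma dot_expand {d : ℕ} (x y : Fin d → ℂ) (a b : ℂ) :
    star (a • x + b • y) ⬝ᵥ (a • x + b • y) = star a * a * (star x ⬝ᵥ x)
      + star b * b * (star y ⬝ᵥ y)
      + star a * b * (star x ⬝ᵥ y) + star b * a * (star y ⬝ᵥ x) := by
  simp only [star_add, star_smul, dotProduct_add,
    add_dotProduct, smul_dotProduct, dotProduct_smul, smul_eq_mul]
  ring

lemma nr_smul {d : ℕ} (A : Matrix (Fin d) (Fin d) ℂ) (x : Fin d → ℂ) (a : ℂ) :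
    nrMap A (a • x) = star a * a * nrMap A x := by
  simpa using nr_expand A x 0 a 0

lemma dot_self {d : ℕ} (v : Fin d → ℂ) :
    ∃ N : ℝ, 0 ≤ N ∧ star v ⬝ᵥ v = (N : ℂ) ∧ (N = 0 → v = 0) := by
  refine ⟨∑ i, ‖v i‖ ^ 2, by positivity, ?_, ?_⟩
  · simp [dotProduct, Complex.conj_mul']
  · intro h
    rw [Finset.sum_eq_zero_iff_of_nonneg (fun i _ => by positivity)] at h
    ext i
    simpa using h i (Finset.mem_univ i)

lemma dot_pos {d : ℕ} (v : Fin d → ℂ) (hv : v ≠ 0) :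
    ∃ N : ℝ, 0 < N ∧ star v ⬝ᵥ v = (N : ℂ) := by
  obtain ⟨N, h0, h1, h2⟩ := dot_self v
  exact ⟨N, lt_of_le_of_ne h0 (fun h => hv (h2 h.symm)), h1⟩

lemma normalize_dot {d : ℕ} (v : Fin d → ℂ) (N : ℝ) (hN : 0 < N) (h : star v ⬝ᵥ v = (N : ℂ)) :
    star (((Real.sqrt N)⁻¹ : ℂ) • v) ⬝ᵥ (((Real.sqrt N)⁻¹ : ℂ) • v) = 1 := by
  have hs : ((Real.sqrt N : ℝ) : ℂ) * (Real.sqrt N : ℝ) = N := by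
    rw [← Complex.ofReal_mul, Real.mul_self_sqrt hN.le]
  have hN' : (N : ℂ) ≠ 0 := by exact_mod_cast hN.ne'
  simp only [star_smul, smul_dotProduct, dotProduct_smul, smul_eq_mul, h]
  have : star ((Real.sqrt N : ℂ)⁻¹) = (Real.sqrt N : ℂ)⁻¹ := by simp
  rw [this, ← mul_assoc, ← mul_inv, hs, inv_mul_cancel₀ hN']

lemma nr_mem {d : ℕ} (A : Matrix (Fin d) (Fin d) ℂ) (v : Fin d → ℂ) (N : ℝ) (hN : 0 < N)
    (h : star v ⬝ᵥ v = (N : ℂ)) : nrMap A v / N ∈ numRange A := by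
  refine ⟨_, normalize_dot v N hN h, ?_⟩
  have hs : ((Real.sqrt N : ℝ) : ℂ) * (Real.sqrt N : ℝ) = N := by
    rw [← Complex.ofReal_mul, Real.mul_self_sqrt hN.le]
  rw [nr_smul]
  have : star ((Real.sqrt N : ℂ)⁻¹) = (Real.sqrt N : ℂ)⁻¹ := by simp
  rw [this, ← mul_inv, hs]
  ring

/-- Toeplitz–Hausdorff. -/
lemma numRange_convex {d : ℕ} (A : Matrix (Fin d) (Fin d) ℂ) : Convex ℝ (numRange A) := by
  rw [convex_iff_segment_subset]
  rintro p ⟨x, hx, hp⟩ q ⟨y, hy, hq⟩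
  by_cases hpq : p = q
  · subst hpq
    rw [segment_same]
    rintro z rfl
    exact ⟨x, hx, hp⟩
  have hr : q - p ≠ 0 := sub_ne_zero.2 (Ne.symm hpq)
  rw [segment_eq_image']
  rintro _ ⟨t, ⟨ht0, ht1⟩, rfl⟩
  set C : Matrix (Fin d) (Fin d) ℂ := (q - p)⁻¹ • (A - p • 1) with hC
  have hCf : ∀ v, nrMap C v = (q - p)⁻¹ * (nrMap A v - p * (star v ⬝ᵥ v)) := by
    intro v
    simp [nrMap, hC, smul_mulVec, sub_mulVec, dotProduct_sub]
  have hCx : nrMap C x = 0 := by rw [hCf, hx, ← hp]; simp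
  have hCy : nrMap C y = 1 := by rw [hCf, hy, ← hq, mul_one, inv_mul_cancel₀ hr]
  set β := star x ⬝ᵥ C *ᵥ y
  set γ := star y ⬝ᵥ C *ᵥ x
  obtain ⟨ω, hω, hω'⟩ := RCLike.exists_norm_eq_mul_self (γ - star β)
  have hωω : star ω * ω = 1 := by
    have := Complex.conj_mul' ω
    simpa [hω] using this
  have him : (star ω * β + ω * γ).im = 0 := by
    have := congrArg Complex.im hω'
    simp at this ⊢
    linarith
  set κ := (star ω * β + ω * γ).re
  have hκ : star ω * β + ω * γ = (κ : ℂ) := by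
    apply Complex.ext <;> simp [κ]
    simpa using him
  set m := (star ω * (star x ⬝ᵥ y)).re
  have hμ : star ω * (star x ⬝ᵥ y) + ω * (star y ⬝ᵥ x) = ((2 * m : ℝ) : ℂ) := by
    have h1 : ω * (star y ⬝ᵥ x) = star (star ω * (star x ⬝ᵥ y)) := by
      rw [star_mul', star_star, ← star_dotProduct_star]; simp [dotProduct_comm]
    rw [h1]
    exact Complex.add_conj _
  let v : ℝ → Fin d → ℂ := fun s => (((1 - s : ℝ) : ℂ) * ω) • x + (s : ℂ) • y
  have hg : ∀ s, nrMap C (v s) = ((s ^ 2 + s * (1 - s) * κ : ℝ) : ℂ) := by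
    intro s
    simp only [v]
    rw [nr_expand, hCx, hCy]
    have e1 : star (((1 - s : ℝ) : ℂ) * ω) = ((1 - s : ℝ) : ℂ) * star ω := by simp
    have e2 : star (s : ℂ) = s := by simp
    rw [e1, e2]
    push_cast
    linear_combination (s : ℂ) * (1 - s) * hκ
  have hn : ∀ s, star (v s) ⬝ᵥ (v s) = (((1 - s) ^ 2 + s ^ 2 + s * (1 - s) * (2 * m) : ℝ) : ℂ) := by
    intro s
    simp only [v]
    rw [dot_expand, hx, hy]
    have e1 : star (((1 - s : ℝ) : ℂ) * ω) = ((1 - s : ℝ) : ℂ) * star ω := by simp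
    have e2 : star (s : ℂ) = s := by simp
    rw [e1, e2]
    push_cast at hμ ⊢
    linear_combination (s : ℂ) * (1 - s) * hμ + (1 - s : ℂ) ^ 2 * hωω
  obtain ⟨s, -, hs⟩ : ∃ s ∈ Set.Icc (0 : ℝ) 1,
      (s ^ 2 + s * (1 - s) * κ) - t * ((1 - s) ^ 2 + s ^ 2 + s * (1 - s) * (2 * m)) = 0 := by
    have := intermediate_value_Icc (zero_le_one (α := ℝ)) (f := fun s : ℝ =>
      (s ^ 2 + s * (1 - s) * κ) - t * ((1 - s) ^ 2 + s ^ 2 + s * (1 - s) * (2 * m)))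
      (by fun_prop)
    exact this ⟨by simp; linarith, by simp; linarith⟩
  have hv : v s ≠ 0 := by
    intro h0
    have h1 : (((1 - s : ℝ) : ℂ) * ω) • x = (-(s : ℂ)) • y := by
      rw [neg_smul]; exact eq_neg_of_add_eq_zero_left h0
    have h2 := congrArg (nrMap C) h1
    rw [nr_smul, nr_smul, hCx, hCy] at h2
    have hs0 : s = 0 := by simpa using h2.symm
    have h3 := hn s
    rw [h0, hs0] at h3
    simp at h3
  obtain ⟨N, hN, hNv⟩ := dot_pos _ hv
  have key := nr_mem A (v s) N hN hNv
  convert key using 1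
  have hNs : N = (1 - s) ^ 2 + s ^ 2 + s * (1 - s) * (2 * m) := by
    have := hNv.symm.trans (hn s)
    exact_mod_cast this
  have h4 : nrMap C (v s) = (t : ℂ) * N := by
    rw [hg, hNs]
    have : (s ^ 2 + s * (1 - s) * κ) = t * ((1 - s) ^ 2 + s ^ 2 + s * (1 - s) * (2 * m)) := by
      linarith
    rw [this]; push_cast; ring
  rw [hCf, hNv] at h4
  have hN' : (N : ℂ) ≠ 0 := by exact_mod_cast hN.ne'
  have h5 : nrMap A (v s) = p * N + (q - p) * (t * N) := by
    rw [← h4, mul_inv_cancel_left₀ hr]; ring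
  rw [h5, eq_div_iff hN']
  simp only [Complex.real_smul]
  ring

lemma exists_support (W : Set ℂ) (hW : Convex ℝ W) (α : ℂ) (h : α ∈ Set.extremePoints ℝ W) :
    ∃ c : ℂ, c ≠ 0 ∧ ∀ z ∈ W, 0 ≤ (c * (z - α)).re := by
  suffices H : ∃ f : ℂ →ₗ[ℝ] ℝ, f ≠ 0 ∧ ∀ z ∈ W, f α ≤ f z by
    obtain ⟨f, hf, hfz⟩ := H
    have hrep : ∀ z : ℂ, (((f 1 : ℝ) - (f Complex.I : ℝ) * Complex.I : ℂ) * z).re = f z := by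
      intro z
      have : z = z.re • (1 : ℂ) + z.im • Complex.I := by
        simp [Complex.re_add_im]
      conv_rhs => rw [this, map_add, map_smul, map_smul]
      simp
      ring
    refine ⟨(f 1 : ℝ) - (f Complex.I : ℝ) * Complex.I, ?_, ?_⟩
    · intro h0
      apply hf
      ext z
      have := hrep z
      rw [h0] at this
      simpa using this.symm
    · intro z hz
      rw [hrep, map_sub]
      linarith [hfz z hz]
  by_cases hi : (interior W).Nonempty
  · have hα : α ∉ interior W := by
      intro hα
      rw [mem_interior_iff_mem_nhds, Metric.mem_nhds_iff] at hα
      obtain ⟨ε, hε, hb⟩ := hα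
      have h1 : α + ((ε / 2 : ℝ) : ℂ) ∈ W := hb (by
        simp [abs_of_pos hε]; linarith)
      have h2 : α - ((ε / 2 : ℝ) : ℂ) ∈ W := hb (by
        simp [abs_of_pos hε]; linarith)
      have h3 : α ∈ openSegment ℝ (α + ((ε / 2 : ℝ) : ℂ)) (α - ((ε / 2 : ℝ) : ℂ)) := by
        refine ⟨1/2, 1/2, by norm_num, by norm_num, by norm_num, ?_⟩
        simp only [Complex.real_smul]; push_cast; ring
      have := h.2 h1 h2 h3
      have h5 : ((ε / 2 : ℝ) : ℂ) = 0 := by simpa using this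
      have : ε / 2 = 0 := by exact_mod_cast h5
      linarith
    obtain ⟨f, hf⟩ := geometric_hahn_banach_point_open hW.interior isOpen_interior hα
    refine ⟨f.toLinearMap, ?_, ?_⟩
    · intro h0
      obtain ⟨z, hz⟩ := hi
      have := hf z hz
      have e : ∀ w, f w = 0 := fun w => by
        have := congrArg (fun g : ℂ →ₗ[ℝ] ℝ => g w) h0
        simpa using this
      rw [e, e] at this
      exact lt_irrefl _ this
    · intro z hz
      have hc : z ∈ closure (interior W) := by
        rw [hW.closure_interior_eq_closure_of_nonempty_interior hi]
        exact subset_closure hz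
      have hcl : IsClosed {w | f α ≤ f w} := isClosed_le continuous_const f.continuous
      exact closure_minimal (fun w hw => (hf w hw).le) hcl hc
  · rw [hW.interior_nonempty_iff_affineSpan_eq_top] at hi
    have hd : (affineSpan ℝ W).direction < ⊤ := by
      rw [lt_top_iff_ne_top]
      intro htop
      apply hi
      rwa [AffineSubspace.direction_eq_top_iff_of_nonempty] at htop
      exact ⟨α, subset_affineSpan ℝ W h.1⟩
    obtain ⟨f, hf0, hf⟩ := Submodule.exists_le_ker_of_lt_top _ hd
    refine ⟨f, hf0, ?_⟩
    intro z hz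
    have : z -ᵥ α ∈ (affineSpan ℝ W).direction :=
      AffineSubspace.vsub_mem_direction (subset_affineSpan ℝ W hz) (subset_affineSpan ℝ W h.1)
    have := hf this
    rw [LinearMap.mem_ker, vsub_eq_sub, map_sub] at this
    linarith

lemma nr_span {d : ℕ} (A : Matrix (Fin d) (Fin d) ℂ) (α : ℂ)
    (hext : α ∈ Set.extremePoints ℝ (numRange A)) (x y : Fin d → ℂ)
    (hx : star x ⬝ᵥ x = 1) (hy : star y ⬝ᵥ y = 1) (hax : nrMap A x = α) (hay : nrMap A y = α)
    (hli : LinearIndependent ℂ ![x, y]) (a b : ℂ) :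
    nrMap A (a • x + b • y) = α * (star (a • x + b • y) ⬝ᵥ (a • x + b • y)) := by
  by_cases hab : a = 0 ∧ b = 0
  · simp [hab.1, hab.2, nrMap]
  rw [LinearIndependent.pair_iff] at hli
  have h1 : a • x + b • y ≠ 0 := fun h => hab (hli a b h)
  have h2 : a • x + (-b) • y ≠ 0 := fun h => hab (by simpa using hli a (-b) h)
  obtain ⟨N, hN, hN1⟩ := dot_pos _ h1
  obtain ⟨M, hM, hM1⟩ := dot_pos _ h2
  have m1 := nr_mem A _ N hN hN1
  have m2 := nr_mem A _ M hM hM1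
  have hN' : (N : ℂ) ≠ 0 := by exact_mod_cast hN.ne'
  have hM' : (M : ℂ) ≠ 0 := by exact_mod_cast hM.ne'
  have hNM : (N : ℂ) + M ≠ 0 := by exact_mod_cast (add_pos hN hM).ne'
  have hsum : nrMap A (a • x + b • y) + nrMap A (a • x + (-b) • y) = α * (N + M) := by
    rw [← hN1, ← hM1, nr_expand, nr_expand, dot_expand, dot_expand, hax, hay, hx, hy, star_neg]
    ring
  have hos : α ∈ openSegment ℝ (nrMap A (a • x + b • y) / N) (nrMap A (a • x + (-b) • y) / M) := by
    refine ⟨N / (N + M), M / (N + M), by positivity, by positivity, by field_simp, ?_⟩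
    simp only [Complex.real_smul]
    push_cast
    rw [div_mul_div_comm, div_mul_div_comm]
    field_simp
    linear_combination hsum
  have := hext.2 m1 m2 hos
  rw [hN1]
  rw [div_eq_iff hN'] at this
  exact this

lemma exists_ortho {d : ℕ} (x y : Fin d → ℂ) (hx : star x ⬝ᵥ x = 1)
    (hli : LinearIndependent ℂ ![x, y]) :
    ∃ (w : Fin d → ℂ) (r k : ℂ), w = r • x + k • y ∧ star w ⬝ᵥ w = 1 ∧ star x ⬝ᵥ w = 0 := by
  rw [LinearIndependent.pair_iff] at hli
  have h1 : (-(star x ⬝ᵥ y)) • x + (1 : ℂ) • y ≠ 0 := fun h => by simpa using (hli _ _ h).2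
  obtain ⟨N, hN, hN1⟩ := dot_pos _ h1
  refine ⟨_, ((Real.sqrt N)⁻¹ : ℂ) * (-(star x ⬝ᵥ y)), ((Real.sqrt N)⁻¹ : ℂ) * 1, ?_,
    normalize_dot _ N hN hN1, ?_⟩
  · rw [smul_add, smul_smul, smul_smul]
  · simp only [dotProduct_smul, dotProduct_add, smul_eq_mul, hx]
    ring

lemma bessel {d : ℕ} (u w v : Fin d → ℂ) (hu : star u ⬝ᵥ u = 1) (hw : star w ⬝ᵥ w = 1)
    (huw : star u ⬝ᵥ w = 0) (hv : star v ⬝ᵥ v = 1) :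
    0 ≤ 1 - ‖star u ⬝ᵥ v‖ ^ 2 - ‖star w ⬝ᵥ v‖ ^ 2 ∧
    (1 - ‖star u ⬝ᵥ v‖ ^ 2 - ‖star w ⬝ᵥ v‖ ^ 2 = 0 →
      v = (star u ⬝ᵥ v) • u + (star w ⬝ᵥ v) • w) := by
  obtain ⟨N, hN, h1, h2⟩ := dot_self (v - ((star u ⬝ᵥ v) • u + (star w ⬝ᵥ v) • w))
  have hconj : ∀ a b : Fin d → ℂ, star a ⬝ᵥ b = star (star b ⬝ᵥ a) := by
    intro a b
    rw [← star_dotProduct_star]; simp [dotProduct_comm]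
  have hwu : star w ⬝ᵥ u = 0 := by rw [hconj, huw]; simp
  have key : N = 1 - ‖star u ⬝ᵥ v‖ ^ 2 - ‖star w ⬝ᵥ v‖ ^ 2 := by
    have e : (N : ℂ) = ((1 - ‖star u ⬝ᵥ v‖ ^ 2 - ‖star w ⬝ᵥ v‖ ^ 2 : ℝ) : ℂ) := by
      rw [← h1]
      push_cast
      rw [← Complex.conj_mul', ← Complex.conj_mul']
      have e1 := hconj v u
      have e2 := hconj v w
      simp only [star_sub, star_add, star_smul, sub_dotProduct, dotProduct_sub, dotProduct_add,
        add_dotProduct, smul_dotProduct, dotProduct_smul, smul_eq_mul, hu, hw, huw, hwu, hv, e1, e2]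
      simp only [Complex.star_def]
      ring
    exact_mod_cast e
  rw [← key]
  exact ⟨hN, fun h => sub_eq_zero.1 (h2 h)⟩

theorem face_aux {d : ℕ} (A : Matrix (Fin d) (Fin d) ℂ) (α c : ℂ) (hc : c ≠ 0)
    (hsup : ∀ z ∈ numRange A, 0 ≤ (c * (z - α)).re) (u w : Fin d → ℂ)
    (hu : star u ⬝ᵥ u = 1) (hw : star w ⬝ᵥ w = 1) (huw : star u ⬝ᵥ w = 0)
    (hL : ∀ a b : ℂ, nrMap A (a • u + b • w) =
      α * (star (a • u + b • w) ⬝ᵥ (a • u + b • w))) (ε : ℝ) (hε : 0 < ε) :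
    IsExtreme ℝ (numRange (A + ((ε : ℂ) * c⁻¹) •
        (1 - vecMulVec u (star u) - vecMulVec w (star w) + Complex.I • vecMulVec u (star u))))
      (segment ℝ α (α + ε * c⁻¹ * Complex.I)) := by
  set E := A + ((ε : ℂ) * c⁻¹) •
        (1 - vecMulVec u (star u) - vecMulVec w (star w) + Complex.I • vecMulVec u (star u)) with hE
  have hconj : ∀ a b : Fin d → ℂ, star a ⬝ᵥ b = star (star b ⬝ᵥ a) := by
    intro a b
    rw [← star_dotProduct_star]; simp [dotProduct_comm]
  have hwu : star w ⬝ᵥ u = 0 := by rw [hconj, huw]; simp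
  have hvm : ∀ p v : Fin d → ℂ, star v ⬝ᵥ vecMulVec p (star p) *ᵥ v
      = ((‖star p ⬝ᵥ v‖ ^ 2 : ℝ) : ℂ) := by
    intro p v
    rw [vecMulVec_mulVec, op_smul_eq_smul, dotProduct_smul, smul_eq_mul, hconj v p]
    push_cast
    rw [← Complex.conj_mul', mul_comm]
    rfl
  have hEf : ∀ v, star v ⬝ᵥ v = 1 → nrMap E v = nrMap A v + ε * c⁻¹ *
      (((1 - ‖star u ⬝ᵥ v‖ ^ 2 - ‖star w ⬝ᵥ v‖ ^ 2 : ℝ) : ℂ)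
        + Complex.I * ((‖star u ⬝ᵥ v‖ ^ 2 : ℝ) : ℂ)) := by
    intro v hv
    simp only [nrMap, hE, add_mulVec, smul_mulVec, sub_mulVec, one_mulVec, dotProduct_add,
      dotProduct_sub, dotProduct_smul, smul_eq_mul, hvm, hv]
    push_cast
    ring
  have hAu : nrMap A u = α := by simpa [hu] using hL 1 0
  have hAw : nrMap A w = α := by simpa [hw] using hL 0 1
  have hre : ∀ v, star v ⬝ᵥ v = 1 → 0 ≤ (c * (nrMap E v - α)).re ∧
      ((c * (nrMap E v - α)).re = 0 → nrMap E v ∈ segment ℝ α (α + ε * c⁻¹ * Complex.I)) := by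
    intro v hv
    obtain ⟨b1, b2⟩ := bessel u w v hu hw huw hv
    have hs := hsup _ ⟨v, hv, rfl⟩
    have hform : c * (nrMap E v - α) = c * (nrMap A v - α) +
      (((ε * (1 - ‖star u ⬝ᵥ v‖ ^ 2 - ‖star w ⬝ᵥ v‖ ^ 2) : ℝ) : ℂ)
        + ((ε * ‖star u ⬝ᵥ v‖ ^ 2 : ℝ) : ℂ) * Complex.I) := by
      rw [hEf v hv]
      push_cast
      field_simp
      ring
    have hre' : (c * (nrMap E v - α)).re = (c * (nrMap A v - α)).re +
        ε * (1 - ‖star u ⬝ᵥ v‖ ^ 2 - ‖star w ⬝ᵥ v‖ ^ 2) := by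
      rw [hform, Complex.add_re, Complex.add_re, Complex.ofReal_re, Complex.re_ofReal_mul,
        Complex.I_re]
      ring
    have hp := mul_nonneg hε.le b1
    refine ⟨by rw [hre']; linarith, fun h0 => ?_⟩
    have hz : ε * (1 - ‖star u ⬝ᵥ v‖ ^ 2 - ‖star w ⬝ᵥ v‖ ^ 2) = 0 := by
      rw [hre'] at h0; linarith
    have hz' := (mul_eq_zero.1 hz).resolve_left hε.ne'
    have hvL := b2 hz'
    have hAv : nrMap A v = α := by
      have := hL (star u ⬝ᵥ v) (star w ⬝ᵥ v)
      rw [← hvL, hv, mul_one] at this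
      exact this
    rw [hEf v hv, hAv, hz', segment_eq_image']
    refine ⟨‖star u ⬝ᵥ v‖ ^ 2, ⟨by positivity, by nlinarith [sq_nonneg ‖star w ⬝ᵥ v‖]⟩, ?_⟩
    simp only [Complex.real_smul, Complex.ofReal_zero]
    ring
  have hsr : ∀ z ∈ segment ℝ α (α + ε * c⁻¹ * Complex.I), (c * (z - α)).re = 0 := by
    rw [segment_eq_image']
    rintro _ ⟨t, -, rfl⟩
    have : c * (α + t • (α + ε * c⁻¹ * Complex.I - α) - α) = ((t * ε : ℝ) : ℂ) * Complex.I := by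
      simp only [Complex.real_smul]
      push_cast
      field_simp
      ring
    simp only [this, Complex.re_ofReal_mul, Complex.I_re, mul_zero]
  have hleft : ∀ z₁ ∈ numRange E, ∀ z₂ ∈ numRange E,
      ∀ z ∈ segment ℝ α (α + ε * c⁻¹ * Complex.I), z ∈ openSegment ℝ z₁ z₂ →
      z₁ ∈ segment ℝ α (α + ε * c⁻¹ * Complex.I) := by
    rintro _ ⟨v₁, hv₁, rfl⟩ _ ⟨v₂, hv₂, rfl⟩ z hz ⟨a, b, ha, hb, hab, rfl⟩
    obtain ⟨p1, p2⟩ := hre v₁ hv₁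
    obtain ⟨q1, -⟩ := hre v₂ hv₂
    have h0 := hsr _ hz
    apply p2
    have e : c * (a • nrMap E v₁ + b • nrMap E v₂ - α) =
        (a : ℂ) * (c * (nrMap E v₁ - α)) + (b : ℂ) * (c * (nrMap E v₂ - α)) := by
      have : (a : ℂ) + b = 1 := by exact_mod_cast hab
      simp only [Complex.real_smul]
      linear_combination c * α * this
    rw [e, Complex.add_re, Complex.re_ofReal_mul, Complex.re_ofReal_mul] at h0
    have := mul_nonneg hb.le q1
    have h3 := mul_nonneg ha.le p1
    have h4 : a * (c * (nrMap E v₁ - α)).re = 0 := by linarith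
    exact (mul_eq_zero.1 h4).resolve_left ha.ne'
  refine ⟨?_, ?_⟩
  · apply (numRange_convex E).segment_subset
    · exact ⟨w, hw, by rw [hEf w hw, hAw, huw, hw]; simp⟩
    · exact ⟨u, hu, by rw [hEf u hu, hAu, hwu, hu]; simp⟩
  · intro z₁ h₁ z₂ h₂ z hz ho
    exact hleft z₁ h₁ z₂ h₂ z hz ho

theorem stmt13 {d : ℕ} (A : Matrix (Fin d) (Fin d) ℂ) (α : ℂ)
    (hext : α ∈ Set.extremePoints ℝ (numRange A))
    (hmg : ∃ x y : Fin d → ℂ, star x ⬝ᵥ x = 1 ∧ star y ⬝ᵥ y = 1 ∧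
      nrMap A x = α ∧ nrMap A y = α ∧ LinearIndependent ℂ ![x, y]) :
    ∃ (Aseq : ℕ → Matrix (Fin d) (Fin d) ℂ) (s : ℕ → Set ℂ),
      Filter.Tendsto Aseq Filter.atTop (nhds A) ∧
      (∀ n, IsExtreme ℝ (numRange (Aseq n)) (s n) ∧
        ∃ p q : ℂ, p ≠ q ∧ s n = segment ℝ p q) ∧
      Filter.Tendsto (fun n => Metric.hausdorffDist (s n) {α}) Filter.atTop (nhds 0) := by
  obtain ⟨x, y, hx, hy, hax, hay, hli⟩ := hmg
  obtain ⟨c, hc, hsup⟩ := exists_support _ (numRange_convex A) α hext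
  obtain ⟨w, r, k, hwe, hw, hxw⟩ := exists_ortho x y hx hli
  have hL : ∀ a b : ℂ, nrMap A (a • x + b • w) =
      α * (star (a • x + b • w) ⬝ᵥ (a • x + b • w)) := by
    intro a b
    have e : a • x + b • w = (a + b * r) • x + (b * k) • y := by
      rw [hwe, smul_add, smul_smul, smul_smul, add_smul, add_assoc]
    rw [e]
    exact nr_span A α hext x y hx hy hax hay hli _ _
  have ht : Filter.Tendsto (fun n : ℕ => 1 / ((n : ℝ) + 1)) Filter.atTop (nhds 0) :=
    tendsto_one_div_add_atTop_nhds_zero_nat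
  have htc : Filter.Tendsto (fun n : ℕ => ((1 / ((n : ℝ) + 1) : ℝ) : ℂ)) Filter.atTop (nhds 0) := by
    have := (Complex.continuous_ofReal.tendsto 0).comp ht
    rw [Complex.ofReal_zero] at this
    exact this
  refine ⟨fun n => A + (((1 / ((n : ℝ) + 1) : ℝ) : ℂ) * c⁻¹) •
        (1 - vecMulVec x (star x) - vecMulVec w (star w) + Complex.I • vecMulVec x (star x)),
    fun n => segment ℝ α (α + ((1 / ((n : ℝ) + 1) : ℝ) : ℂ) * c⁻¹ * Complex.I), ?_, ?_, ?_⟩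
  · have h1 := ((htc.mul_const c⁻¹).smul_const
      (1 - vecMulVec x (star x) - vecMulVec w (star w) + Complex.I • vecMulVec x (star x))).const_add A
    simpa only [zero_mul, zero_smul, add_zero] using h1
  · intro n
    have hpos : 0 < 1 / ((n : ℝ) + 1) := by positivity
    refine ⟨face_aux A α c hc hsup x w hx hw hxw hL _ hpos, _, _, ?_, rfl⟩
    intro h
    have h0 : ((1 / ((n : ℝ) + 1) : ℝ) : ℂ) * c⁻¹ * Complex.I = 0 := by
      simpa only [left_eq_add] using h
    have hne : ((1 / ((n : ℝ) + 1) : ℝ) : ℂ) ≠ 0 := by exact_mod_cast hpos.ne'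
    exact mul_ne_zero (mul_ne_zero hne (inv_ne_zero hc)) Complex.I_ne_zero h0
  · have hb : Filter.Tendsto (fun n : ℕ => ‖((1 / ((n : ℝ) + 1) : ℝ) : ℂ) * c⁻¹ * Complex.I‖)
        Filter.atTop (nhds 0) := by
      have := ((htc.mul_const c⁻¹).mul_const Complex.I).norm
      simpa only [zero_mul, norm_zero] using this
    refine squeeze_zero (fun n => Metric.hausdorffDist_nonneg) (fun n => ?_) hb
    apply Metric.hausdorffDist_le_of_mem_dist (norm_nonneg _)
    · beta_reduce
      rw [segment_eq_image']
      rintro _ ⟨t, ⟨ht0, ht1⟩, rfl⟩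
      refine ⟨α, rfl, ?_⟩
      rw [dist_eq_norm, add_sub_cancel_left, add_sub_cancel_left, norm_smul, Real.norm_eq_abs,
        abs_of_nonneg ht0]
      exact mul_le_of_le_one_left (norm_nonneg _) ht1
    · intro z hz
      rw [Set.mem_singleton_iff] at hz
      subst hz
      exact ⟨z, left_mem_segment _ _ _, by simp only [dist_self]; exact norm_nonneg _⟩
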